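/- arXiv:1609.06651 — 2 statements merged into one kernel-verified Lean document; each statement's English description precedes it below -/
import Mathlib

section
/- Let $n$ be a positive integer, $p \in (0,1)$, and let $X$ be a binomial random variable with parameters $n$ and $p$. If $k$ is a positive integer with $np < k \le n-1$, and $\ell := \lfloor \frac{k - np}{1-p} \rfloor$ (so $\ell < k$), then $\mathbb{P}[X \ge k] \ge \frac{p^{2(\ell+1)}}{2} \cdot \binom{n}{\ell+1} \big/ \binom{k}{\ell+1}$. -/
/-- The binomial probability mass function: `P[Bin(n,p) = i] = C(n,i) p^i (1-p)^(n-i)`. -/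
noncomputable def binPMF (n : ℕ) (p : ℝ) (i : ℕ) : ℝ :=
  (n.choose i : ℝ) * p ^ i * (1 - p) ^ (n - i)

/-- The binomial tail probability `P[Bin(n,p) ≥ k]`. -/
noncomputable def binTail (n : ℕ) (p : ℝ) (k : ℕ) : ℝ :=
  ∑ i ∈ Finset.Icc k n, binPMF n p i

/-- The tail conditional expectation `E[Bin(n,p) | Bin(n,p) ≥ k]`,
i.e. `E[X · 1_{X ≥ k}] / P[X ≥ k]`. -/
noncomputable def binTCE (n : ℕ) (p : ℝ) (k : ℕ) : ℝ :=
  (∑ i ∈ Finset.Icc k n, (i : ℝ) * binPMF n p i) / binTail n p k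

/-!
Removing `j = ℓ + 1` trials that are all required to succeed gives
`P[Bin(n,p) ≥ k] ≥ p ^ j * P[Bin(n-j,p) ≥ k-j]`, and `ℓ` is chosen so that `k - j ≤ (n - j) p`; the
last probability is then at least `1/2`. The remaining factor `p ^ j * C(n,j) / C(k,j)` is at most
`1` because it is the product of the ratios `(n - i) p / (k - i)` for `i ≤ ℓ`, none of which
exceeds `1`.

The bound `1/2` comes from working with `log p`: the function `F t = P[Bin(m, exp t) ≥ a]` has
derivative `a * P[Bin(m, exp t) = a]`, and for `a ≤ m p` this derivative is at `log p + s` at most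
what it is at `log p - s`, since
`log (1 - p * exp (-s)) - log (1 - p * exp s) = ∑ i ≥ 1, 2 * sinh (i * s) * p ^ i / i` and
`i * s ≤ sinh (i * s)`. Integrating over `s` up to `-log p` yields
`1 ≤ F 0 + F (2 log p) ≤ 2 F (log p)`.
-/

open Real

theorem choose_mul_pow_le_choose {R : Type*} [CommRing R] [LinearOrder R] [IsStrictOrderedRing R]
    {n k j : ℕ} {p : R} (hp : 0 ≤ p) (h : ∀ i < j, ((n - i : ℕ) : R) * p ≤ ((k - i : ℕ) : R)) :
    (n.choose j : R) * p ^ j ≤ k.choose j := by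
  have factorial_mul_choose (a : ℕ) :
      (j.factorial : R) * a.choose j = ∏ i ∈ Finset.range j, ((a - i : ℕ) : R) := by
    rw [← Nat.cast_prod, ← Nat.descFactorial_eq_prod_range,
      Nat.descFactorial_eq_factorial_mul_choose, Nat.cast_mul]
  have factorial_pos : (0 : R) < j.factorial := by exact_mod_cast j.factorial_pos
  refine le_of_mul_le_mul_left ?_ factorial_pos
  calc (j.factorial : R) * (n.choose j * p ^ j)
      = ∏ i ∈ Finset.range j, ((n - i : ℕ) : R) * p := by
        rw [← mul_assoc, factorial_mul_choose, Finset.prod_mul_distrib, Finset.prod_const,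
          Finset.card_range]
    _ ≤ ∏ i ∈ Finset.range j, ((k - i : ℕ) : R) :=
        Finset.prod_le_prod (fun i _ => by positivity) fun i hi => h i (Finset.mem_range.1 hi)
    _ = j.factorial * k.choose j := (factorial_mul_choose k).symm

theorem choose_succ_mul_pow_le_choose_succ {R : Type*} [CommRing R] [LinearOrder R]
    [IsStrictOrderedRing R] {n k ℓ : ℕ} {p : R} (hp : 0 ≤ p) (hp1 : p ≤ 1) (hkn : k ≤ n)
    (hℓk : ℓ ≤ k) (hℓ : ℓ * (1 - p) ≤ k - n * p) :
    (n.choose (ℓ + 1) : R) * p ^ (ℓ + 1) ≤ k.choose (ℓ + 1) := by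
  refine choose_mul_pow_le_choose hp fun i hi => ?_
  have hiℓ : (i : R) * (1 - p) ≤ ℓ * (1 - p) :=
    mul_le_mul_of_nonneg_right (by exact_mod_cast Nat.lt_succ_iff.1 hi) (sub_nonneg.2 hp1)
  rw [Nat.cast_sub (by lia), Nat.cast_sub (by lia)]
  linarith

theorem add_le_two_mul_of_deriv_reflect_le {F f : ℝ → ℝ} {c r : ℝ} (hr : 0 ≤ r)
    (hF : ∀ x ∈ Set.Icc (c - r) (c + r), HasDerivAt F (f x) x)
    (hf : ∀ s ∈ Set.Ioo 0 r, f (c + s) ≤ f (c - s)) :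
    F (c + r) + F (c - r) ≤ 2 * F c := by
  have hderiv : ∀ s ∈ Set.Icc 0 r,
      HasDerivAt (fun s => F (c + s) + F (c - s)) (f (c + s) - f (c - s)) s := by
    rintro s ⟨hs0, hsr⟩
    have hadd := (hF (c + s) ⟨by linarith, by linarith⟩).comp_const_add c s
    have hsub := (hF (c - s) ⟨by linarith, by linarith⟩).comp_const_sub c s
    exact hadd.add hsub
  have hanti : AntitoneOn (fun s => F (c + s) + F (c - s)) (Set.Icc 0 r) := by
    refine antitoneOn_of_hasDerivWithinAt_nonpos (convex_Icc 0 r)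
      (fun s hs => (hderiv s hs).continuousAt.continuousWithinAt)
      (fun s hs => (hderiv s (interior_subset hs)).hasDerivWithinAt) fun s hs => ?_
    rw [interior_Icc] at hs
    exact sub_nonpos.2 (hf s hs)
  have hends := hanti (Set.left_mem_Icc.2 hr) (Set.right_mem_Icc.2 hr) hr
  simp only [add_zero, sub_zero] at hends
  linarith

theorem hasSum_sinh_mul_pow_div {p s : ℝ} (hp : 0 ≤ p) (hs : 0 ≤ s) (hps : p * exp s < 1) :
    HasSum (fun i : ℕ => 2 * sinh ((i + 1) * s) * p ^ (i + 1) / (i + 1))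
      (log (1 - p * exp (-s)) - log (1 - p * exp s)) := by
  have hexp : p * exp (-s) ≤ p * exp s := by gcongr; linarith
  have habs : |p * exp s| < 1 := by rwa [abs_of_nonneg (by positivity)]
  have habs_neg : |p * exp (-s)| < 1 := by
    rw [abs_of_nonneg (by positivity)]
    exact hexp.trans_lt hps
  have hsum := (hasSum_pow_div_log_of_abs_lt_one habs).sub
    (hasSum_pow_div_log_of_abs_lt_one habs_neg)
  rw [neg_sub_neg] at hsum
  refine hsum.congr_fun fun i => ?_
  have hpow (x : ℝ) : exp x ^ (i + 1) = exp ((i + 1) * x) := by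
    rw [← exp_nat_mul, Nat.cast_succ]
  rw [mul_pow, mul_pow, hpow, hpow, sinh_eq, mul_neg]
  ring

theorem two_mul_mul_div_le_log_sub_log {p s : ℝ} (hp : 0 ≤ p) (hs : 0 ≤ s) (hps : p * exp s < 1) :
    2 * s * (p / (1 - p)) ≤ log (1 - p * exp (-s)) - log (1 - p * exp s) := by
  have hp1 : p < 1 := (le_mul_of_one_le_right hp (one_le_exp hs)).trans_lt hps
  have hgeom : HasSum (fun i : ℕ => 2 * s * p ^ (i + 1)) (2 * s * (p / (1 - p))) := by
    simpa only [pow_succ', div_eq_mul_inv] using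
      ((hasSum_geometric_of_lt_one hp hp1).mul_left p).mul_left (2 * s)
  refine hasSum_le (fun i => ?_) hgeom (hasSum_sinh_mul_pow_div hp hs hps)
  have hsinh : (i + 1) * s ≤ sinh ((i + 1) * s) := self_le_sinh_iff.2 (by positivity)
  calc 2 * s * p ^ (i + 1) = 2 * ((i + 1) * s) * p ^ (i + 1) / (i + 1) := by field_simp
    _ ≤ 2 * sinh ((i + 1) * s) * p ^ (i + 1) / (i + 1) := by gcongr

theorem binPMF_nonneg {p : ℝ} (hp : 0 ≤ p) (hp1 : p ≤ 1) (n i : ℕ) : 0 ≤ binPMF n p i := by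
  have : 0 ≤ 1 - p := sub_nonneg.2 hp1
  unfold binPMF
  positivity

theorem binPMF_eq_zero_of_lt {n i : ℕ} (h : n < i) (p : ℝ) : binPMF n p i = 0 := by
  simp [binPMF, Nat.choose_eq_zero_of_lt h]

theorem binTail_nonneg {p : ℝ} (hp : 0 ≤ p) (hp1 : p ≤ 1) (n k : ℕ) : 0 ≤ binTail n p k :=
  Finset.sum_nonneg fun i _ => binPMF_nonneg hp hp1 n i

theorem binTail_one {n k : ℕ} (h : k ≤ n) : binTail n 1 k = 1 := by
  rw [binTail, Finset.sum_eq_single_of_mem n (Finset.right_mem_Icc.2 h)]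
  · simp [binPMF]
  · intro i hi hin
    have hpos : n - i ≠ 0 := by grind
    simp [binPMF, hpos]

theorem mul_binPMF_le_binPMF_succ_succ {p : ℝ} (hp : 0 ≤ p) (hp1 : p ≤ 1) (n i : ℕ) :
    p * binPMF n p i ≤ binPMF (n + 1) p (i + 1) := by
  have : 0 ≤ 1 - p := sub_nonneg.2 hp1
  have hchoose : n.choose i ≤ (n + 1).choose (i + 1) := by
    rw [Nat.choose_succ_succ]
    exact Nat.le_add_right _ _
  calc p * binPMF n p i = n.choose i * p ^ (i + 1) * (1 - p) ^ (n - i) := by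
        unfold binPMF
        ring
    _ ≤ (n + 1).choose (i + 1) * p ^ (i + 1) * (1 - p) ^ (n - i) := by gcongr
    _ = binPMF (n + 1) p (i + 1) := by rw [binPMF, Nat.add_sub_add_right]

theorem mul_binTail_le_binTail_succ_succ {p : ℝ} (hp : 0 ≤ p) (hp1 : p ≤ 1) (n k : ℕ) :
    p * binTail n p k ≤ binTail (n + 1) p (k + 1) := by
  rw [binTail, binTail, ← Finset.map_add_right_Icc k n 1, Finset.sum_map, Finset.mul_sum]
  exact Finset.sum_le_sum fun i _ => mul_binPMF_le_binPMF_succ_succ hp hp1 n i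

theorem pow_mul_binTail_le_binTail_add_add {p : ℝ} (hp : 0 ≤ p) (hp1 : p ≤ 1) (n k j : ℕ) :
    p ^ j * binTail n p k ≤ binTail (n + j) p (k + j) := by
  induction j with
  | zero => simp
  | succ j ih =>
    calc p ^ (j + 1) * binTail n p k = p * (p ^ j * binTail n p k) := by ring
      _ ≤ p * binTail (n + j) p (k + j) := by gcongr
      _ ≤ binTail (n + (j + 1)) p (k + (j + 1)) := mul_binTail_le_binTail_succ_succ hp hp1 _ _

theorem hasDerivAt_binPMF_exp (n i : ℕ) (t : ℝ) :
    HasDerivAt (fun t => binPMF n (exp t) i)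
      (i * binPMF n (exp t) i - (i + 1 : ℕ) * binPMF n (exp t) (i + 1)) t := by
  have hsuccess : HasDerivAt (fun t => exp t ^ i) (i * exp t ^ i) t := by
    simpa only [← exp_nat_mul, mul_comm] using (hasDerivAt_mul_const (i : ℝ) (x := t)).exp
  have hfailure : HasDerivAt (fun t => (1 - exp t) ^ (n - i))
      ((n - i : ℕ) * (1 - exp t) ^ (n - i - 1) * -exp t) t :=
    ((hasDerivAt_exp t).const_sub 1).pow (n - i)
  have hchoose : (n.choose (i + 1) : ℝ) * (i + 1 : ℕ) = n.choose i * (n - i : ℕ) := by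
    exact_mod_cast Nat.choose_succ_right_eq n i
  refine ((hsuccess.const_mul (n.choose i : ℝ)).mul hfailure).congr_deriv ?_
  rw [binPMF, binPMF, ← Nat.sub_sub]
  linear_combination (exp t ^ (i + 1) * (1 - exp t) ^ (n - i - 1)) * hchoose

theorem hasDerivAt_binTail_exp (n k : ℕ) (t : ℝ) :
    HasDerivAt (fun t => binTail n (exp t) k) (k * binPMF n (exp t) k) t := by
  have hsum := HasDerivAt.fun_sum fun i (_ : i ∈ Finset.Icc k n) => hasDerivAt_binPMF_exp n i t
  refine hsum.congr_deriv ?_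
  rcases le_or_gt k n with hkn | hnk
  · have htelescope := Finset.sum_Icc_sub hkn fun i => (i : ℝ) * binPMF n (exp t) i
    rw [binPMF_eq_zero_of_lt n.lt_succ_self, mul_zero, zero_sub] at htelescope
    rw [← neg_inj, ← Finset.sum_neg_distrib, ← htelescope]
    simp only [neg_sub]
  · simp [hnk, binPMF_eq_zero_of_lt hnk]

theorem binPMF_mul_exp_le_binPMF_mul_exp_neg {n k : ℕ} {p s : ℝ} (hp : 0 ≤ p) (hs : 0 ≤ s)
    (hps : p * exp s < 1) (hk : (k : ℝ) ≤ n * p) :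
    binPMF n (p * exp s) k ≤ binPMF n (p * exp (-s)) k := by
  have hp1 : p < 1 := (le_mul_of_one_le_right hp (one_le_exp hs)).trans_lt hps
  have hkn : k ≤ n :=
    Nat.cast_le.1 (hk.trans (mul_le_of_le_one_right n.cast_nonneg hp1.le))
  have hu : 0 < 1 - p * exp s := sub_pos.2 hps
  have hv : 0 < 1 - p * exp (-s) := by
    have : p * exp (-s) ≤ p * exp s := by gcongr; linarith
    linarith
  have hodds : (k : ℝ) ≤ (n - k : ℕ) * (p / (1 - p)) := by
    rw [Nat.cast_sub hkn, ← mul_div_assoc, le_div_iff₀ (sub_pos.2 hp1)]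
    linarith
  have hlog : k * s + (n - k : ℕ) * log (1 - p * exp s) ≤
      k * -s + (n - k : ℕ) * log (1 - p * exp (-s)) := by
    have hscaled := mul_le_mul_of_nonneg_left (two_mul_mul_div_le_log_sub_log hp hs hps)
      (n - k : ℕ).cast_nonneg
    have hodds_scaled := mul_le_mul_of_nonneg_left hodds (by positivity : 0 ≤ 2 * s)
    linarith
  have hpow : exp s ^ k * (1 - p * exp s) ^ (n - k) ≤
      exp (-s) ^ k * (1 - p * exp (-s)) ^ (n - k) := by
    have hexp {x y : ℝ} (hy : 0 < y) :
        exp x ^ k * y ^ (n - k) = exp (k * x + (n - k : ℕ) * log y) := by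
      rw [exp_add, exp_nat_mul, exp_nat_mul, exp_log hy]
    rw [hexp hu, hexp hv]
    exact exp_le_exp.2 hlog
  unfold binPMF
  calc n.choose k * (p * exp s) ^ k * (1 - p * exp s) ^ (n - k)
      = n.choose k * p ^ k * (exp s ^ k * (1 - p * exp s) ^ (n - k)) := by ring
    _ ≤ n.choose k * p ^ k * (exp (-s) ^ k * (1 - p * exp (-s)) ^ (n - k)) := by gcongr
    _ = n.choose k * (p * exp (-s)) ^ k * (1 - p * exp (-s)) ^ (n - k) := by ring

theorem one_half_le_binTail {n k : ℕ} {p : ℝ} (hp : 0 < p) (hp1 : p ≤ 1) (hk : (k : ℝ) ≤ n * p) :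
    1 / 2 ≤ binTail n p k := by
  have hkn : k ≤ n :=
    Nat.cast_le.1 (hk.trans (mul_le_of_le_one_right n.cast_nonneg hp1))
  have hreflect : ∀ s ∈ Set.Ioo 0 (-log p),
      k * binPMF n (exp (log p + s)) k ≤ k * binPMF n (exp (log p - s)) k := by
    rintro s ⟨hs0, hs⟩
    have hps : p * exp s < 1 := by
      rw [← exp_log hp, ← exp_add, exp_lt_one_iff]
      linarith
    rw [sub_eq_add_neg, exp_add, exp_add, exp_log hp]
    gcongr
    exact binPMF_mul_exp_le_binPMF_mul_exp_neg hp.le hs0.le hps hk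
  have hmid := add_le_two_mul_of_deriv_reflect_le (neg_nonneg.2 (log_nonpos hp.le hp1))
    (fun t _ => hasDerivAt_binTail_exp n k t) hreflect
  rw [add_neg_cancel, exp_zero, binTail_one hkn, exp_log hp] at hmid
  have hlow : 0 ≤ binTail n (exp (log p - -log p)) k :=
    binTail_nonneg (exp_nonneg _) (exp_le_one_iff.2 (by linarith [log_nonpos hp.le hp1])) n k
  linarith

theorem pow_div_two_le_binTail_add_add {n k : ℕ} {p : ℝ} (hp : 0 < p) (hp1 : p ≤ 1)
    (hk : (k : ℝ) ≤ n * p) (j : ℕ) : p ^ j / 2 ≤ binTail (n + j) p (k + j) :=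
  calc p ^ j / 2 = p ^ j * (1 / 2) := by ring
    _ ≤ p ^ j * binTail n p k := by gcongr; exact one_half_le_binTail hp hp1 hk
    _ ≤ binTail (n + j) p (k + j) := pow_mul_binTail_le_binTail_add_add hp.le hp1 n k j

theorem binomial_tail_lower_bound
    (n k : ℕ) (p : ℝ) (hn : 0 < n) (hp : 0 < p) (hp1 : p < 1)
    (hk : 0 < k) (hlow : (n : ℝ) * p < k) (hkn : k ≤ n - 1)
    (ℓ : ℕ) (hℓ : ℓ = ⌊((k : ℝ) - n * p) / (1 - p)⌋₊) :
    binTail n p k ≥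
      p ^ (2 * (ℓ + 1)) / 2 * ((n.choose (ℓ + 1) : ℝ) / (k.choose (ℓ + 1) : ℝ)) := by
  have hq : 0 < 1 - p := sub_pos.2 hp1
  obtain ⟨hℓ_le, hℓ_lt⟩ : ℓ * (1 - p) ≤ k - n * p ∧ k - n * p < (ℓ + 1) * (1 - p) := by
    rw [← le_div_iff₀ hq, ← div_lt_iff₀ hq, hℓ]
    exact ⟨Nat.floor_le (div_nonneg (by linarith) hq.le), Nat.lt_floor_add_one _⟩
  have hℓk : ℓ < k := by
    have : (k : ℝ) < n := by exact_mod_cast (by lia : k < n)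
    have : (ℓ : ℝ) < k := by nlinarith
    exact_mod_cast this
  have hchoose : (n.choose (ℓ + 1) : ℝ) * p ^ (ℓ + 1) ≤ k.choose (ℓ + 1) :=
    choose_succ_mul_pow_le_choose_succ hp.le hp1.le (by lia) hℓk.le hℓ_le
  have htail : p ^ (ℓ + 1) / 2 ≤ binTail n p k := by
    obtain ⟨a, rfl⟩ := Nat.exists_eq_add_of_le' hℓk
    obtain ⟨m, rfl⟩ := Nat.exists_eq_add_of_le' (by lia : ℓ + 1 ≤ n)
    refine pow_div_two_le_binTail_add_add hp hp1.le ?_ (ℓ + 1)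
    push_cast at hℓ_lt
    linarith
  calc p ^ (2 * (ℓ + 1)) / 2 * ((n.choose (ℓ + 1) : ℝ) / k.choose (ℓ + 1))
      = p ^ (ℓ + 1) / 2 * (n.choose (ℓ + 1) * p ^ (ℓ + 1) / k.choose (ℓ + 1)) := by ring
    _ ≤ p ^ (ℓ + 1) / 2 :=
        mul_le_of_le_one_right (by positivity) (div_le_one_of_le₀ hchoose (by positivity))
    _ ≤ binTail n p k := htail
end

section
/- Let $Y \sim \mathrm{Poi}(\mu)$ with $\mu > 0$, and let $k$ be a positive integer. Then $\frac{\mathbb{P}[Y \ge k]}{\mathbb{P}[Y \ge k-1]} \le \frac{\mu}{k}$. -/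
/-- The Poisson probability mass function: `P[Poi(μ) = i] = exp(-μ) μ^i / i!`. -/
noncomputable def poiPMF (μ : ℝ) (i : ℕ) : ℝ :=
  Real.exp (-μ) * μ ^ i / (Nat.factorial i : ℝ)

/-- The Poisson tail probability `P[Poi(μ) ≥ k]`. -/
noncomputable def poiTail (μ : ℝ) (k : ℕ) : ℝ :=
  ∑' j : ℕ, poiPMF μ (k + j)

/-- The tail conditional expectation `E[Poi(μ) | Poi(μ) ≥ k]`,
i.e. `E[Y · 1_{Y ≥ k}] / P[Y ≥ k]`. -/
noncomputable def poiTCE (μ : ℝ) (k : ℕ) : ℝ :=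
  (∑' j : ℕ, ((k + j : ℕ) : ℝ) * poiPMF μ (k + j)) / poiTail μ k

/-!
Successive Poisson weights satisfy `p (i + 1) = μ / (i + 1) * p i`, and the ratio `μ / (i + 1)`
decreases in `i`. So every term of the tail from `m + 1` is at most `μ / (m + 1)` times the
corresponding term of the tail from `m`; summing gives the bound.
-/

theorem poiPMF_nonneg {μ : ℝ} (hμ : 0 ≤ μ) (i : ℕ) : 0 ≤ poiPMF μ i := by
  unfold poiPMF
  positivity

theorem poiPMF_add_one (μ : ℝ) (i : ℕ) : poiPMF μ (i + 1) = μ / (i + 1) * poiPMF μ i := by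
  unfold poiPMF
  rw [Nat.factorial_succ, pow_succ]
  push_cast
  field_simp

theorem poiPMF_add_one_le {μ : ℝ} (hμ : 0 ≤ μ) {m i : ℕ} (hmi : m ≤ i) :
    poiPMF μ (i + 1) ≤ μ / (m + 1) * poiPMF μ i := by
  have h_nonneg := poiPMF_nonneg hμ i
  rw [poiPMF_add_one]
  gcongr

theorem summable_poiPMF (μ : ℝ) : Summable (poiPMF μ) := by
  refine ((Real.summable_pow_div_factorial μ).mul_left (Real.exp (-μ))).congr fun i ↦ ?_
  rw [poiPMF, mul_div_assoc]

theorem summable_poiPMF_add (μ : ℝ) (k : ℕ) : Summable fun j ↦ poiPMF μ (k + j) :=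
  (summable_poiPMF μ).comp_injective (add_right_injective k)

theorem poiTail_nonneg {μ : ℝ} (hμ : 0 ≤ μ) (k : ℕ) : 0 ≤ poiTail μ k :=
  tsum_nonneg fun _ ↦ poiPMF_nonneg hμ _

theorem poiTail_add_one_le {μ : ℝ} (hμ : 0 ≤ μ) (m : ℕ) :
    poiTail μ (m + 1) ≤ μ / (m + 1) * poiTail μ m := by
  have h_term (j : ℕ) : poiPMF μ (m + 1 + j) ≤ μ / (m + 1) * poiPMF μ (m + j) := by
    rw [add_right_comm]
    exact poiPMF_add_one_le hμ (Nat.le_add_right m j)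
  calc
    poiTail μ (m + 1) ≤ ∑' j, μ / (m + 1) * poiPMF μ (m + j) :=
      (summable_poiPMF_add μ (m + 1)).tsum_le_tsum h_term ((summable_poiPMF_add μ m).mul_left _)
    _ = μ / (m + 1) * poiTail μ m := tsum_mul_left

theorem poisson_tail_ratio_bound
    (μ : ℝ) (k : ℕ) (hμ : 0 < μ) (hk : 0 < k) :
    poiTail μ k / poiTail μ (k - 1) ≤ μ / k := by
  obtain ⟨m, rfl⟩ := Nat.exists_eq_add_one.mpr hk
  rw [Nat.add_sub_cancel, Nat.cast_add_one]
  exact div_le_of_le_mul₀ (poiTail_nonneg hμ.le m) (by positivity) (poiTail_add_one_le hμ.le m)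
end
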